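/- For each integer M ≥ 2 let P_M be the behaviour with M settings defined by P_M(a,b|x,y) = (1/4)·(1 − a·b·cos(π(2(x−y)−1)/(2M))) for a,b ∈ {−1,+1} and x,y ∈ {1,…,M} (the quantum statistics of a maximally entangled two-qubit state with chained measurement settings). Then for every decomposition P_M = p·P_L + (1−p)·Q, where p ∈ [0,1], P_L is a behaviour admitting an LHV+FHV model and Q is a behaviour, one has p ≤ M·(1 − cos(π/(2M))). In particular the supremum of such p (which equals μ_F(P_M) = μ_L(P_M)) tends to 0 as M → ∞. -/

import Mathlib

/-!
In the chained behaviour the outcomes rarely agree on the edges of the path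
`x₀, y₀, x₁, y₁, …, y_{M-1}`, yet they rarely differ at its two ends. A local-free behaviour cannot
do both: this path has odd length, so outcomes which differ along each of its edges differ at its
ends. Averaging over the hidden variable, the `2M` probabilities of these events sum to at least
`1`, which is the chained Bell inequality of Braunstein and Caves. This sum of probabilities is
linear and monotone, so its value on any behaviour bounds the local-free weight. On the chained
behaviour each of the `2M` terms is `(1 - cos (π / (2M))) / 2 = O(1 / M²)`.
-/

open scoped BigOperators Classical
open Finset

noncomputable section

/-- The real value `±1` associated with a Boolean outcome. -/
def outVal (a : Bool) : ℝ := if a then 1 else -1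

/-- A behaviour: nonnegative probabilities summing to one for every pair of settings. -/
def IsBehaviour {M N : ℕ} (P : Bool → Bool → Fin M → Fin N → ℝ) : Prop :=
  (∀ a b x y, 0 ≤ P a b x y) ∧ (∀ x y, ∑ a, ∑ b, P a b x y = 1)

/-- A behaviour admits an LHV+FHV model (is local-free). -/
def LocalFree {M N : ℕ} (P : Bool → Bool → Fin M → Fin N → ℝ) : Prop :=
  ∃ (n : ℕ) (q : Fin n → ℝ) (A : Bool → Fin M → Fin n → ℝ) (B : Bool → Fin N → Fin n → ℝ),
    (∀ l, 0 ≤ q l) ∧ (∑ l, q l = 1) ∧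
    (∀ a x l, 0 ≤ A a x l) ∧ (∀ x l, ∑ a, A a x l = 1) ∧
    (∀ b y l, 0 ≤ B b y l) ∧ (∀ y l, ∑ b, B b y l = 1) ∧
    (∀ a b x y, P a b x y = ∑ l, q l * A a x l * B b y l)

/-- The chained-Bell quantum behaviour of a maximally entangled two-qubit state
with `M` settings per side (settings `x, y ∈ {1, …, M}` encoded as `Fin M`). -/
def chainedBehaviour (M : ℕ) : Bool → Bool → Fin M → Fin M → ℝ :=
  fun a b x y => (1 / 4) * (1 - outVal a * outVal b *
    Real.cos (Real.pi * (2 * ((x.1 : ℝ) - (y.1 : ℝ)) - 1) / (2 * (M : ℝ))))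

/-- The agreement probability of the outcomes at settings `x` and `y`, the event that the chained
Bell inequality counts along the chain. -/
def probEq {M N : ℕ} (P : Bool → Bool → Fin M → Fin N → ℝ) (x : Fin M) (y : Fin N) : ℝ :=
  P true true x y + P false false x y

/-- The disagreement probability of the outcomes at settings `x` and `y`, the event that the
chained Bell inequality counts at the closing pair of the chain. -/
def probNe {M N : ℕ} (P : Bool → Bool → Fin M → Fin N → ℝ) (x : Fin M) (y : Fin N) : ℝ :=
  P true false x y + P false true x y

/-- The left-hand side of the chained (Braunstein–Caves) Bell inequality for `n + 1` settings per
party, written with event probabilities instead of correlators. -/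
def chainSum {n : ℕ} (P : Bool → Bool → Fin (n + 1) → Fin (n + 1) → ℝ) : ℝ :=
  ∑ k, probEq P k k + ∑ k : Fin n, probEq P k.succ k.castSucc + probNe P 0 (Fin.last n)

/-- The agreement probability of two independent bits which are `true` with probabilities `s` and
`t`, that is, the contribution of one hidden state to `probEq`. -/
def agreeProb (s t : ℝ) : ℝ := s * t + (1 - s) * (1 - t)

/-- The weights `p` with which a local-free behaviour occurs in a decomposition of `P`; the
local-free fraction of `P` is their supremum. -/
def freeWeights {M N : ℕ} (P : Bool → Bool → Fin M → Fin N → ℝ) : Set ℝ :=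
  {p | p ∈ Set.Icc (0 : ℝ) 1 ∧ ∃ PL Q : Bool → Bool → Fin M → Fin N → ℝ,
    IsBehaviour PL ∧ LocalFree PL ∧ IsBehaviour Q ∧
      ∀ a b x y, P a b x y = p * PL a b x y + (1 - p) * Q a b x y}

theorem le_sum_chain_of_quadrangle {α β R : Type*} [AddCommMonoid R] [PartialOrder R]
    [IsOrderedAddMonoid R] {d : α → β → R}
    (hd : ∀ x x' y y', d x y' ≤ d x y + d x' y + d x' y') {n : ℕ}
    (x : Fin (n + 1) → α) (y : Fin (n + 1) → β) :
    d (x 0) (y (Fin.last n)) ≤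
      ∑ k, d (x k) (y k) + ∑ k : Fin n, d (x k.succ) (y k.castSucc) := by
  induction n with
  | zero => simp
  | succ n ih =>
    have ih := ih (fun k => x k.castSucc) (fun k => y k.castSucc)
    calc d (x 0) (y (Fin.last (n + 1)))
        ≤ d (x 0) (y (Fin.last n).castSucc)
            + d (x (Fin.last (n + 1))) (y (Fin.last n).castSucc)
            + d (x (Fin.last (n + 1))) (y (Fin.last (n + 1))) := hd _ _ _ _
      _ ≤ (∑ k : Fin (n + 1), d (x k.castSucc) (y k.castSucc)
              + ∑ k : Fin n, d (x k.succ.castSucc) (y k.castSucc.castSucc))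
            + d (x (Fin.last (n + 1))) (y (Fin.last n).castSucc)
            + d (x (Fin.last (n + 1))) (y (Fin.last (n + 1))) := by
          gcongr
          exact ih
      _ = _ := by
          rw [Fin.sum_univ_castSucc (n := n + 1),
            Fin.sum_univ_castSucc (fun k : Fin (n + 1) => d (x k.succ) (y k.castSucc))]
          simp only [Fin.succ_castSucc, Fin.succ_last]
          abel

theorem agreeProb_quadrangle {s₁ s₂ t₁ t₂ : ℝ} (hs₁ : s₁ ∈ Set.Icc 0 1)
    (hs₂ : s₂ ∈ Set.Icc 0 1) (ht₁ : t₁ ∈ Set.Icc 0 1) (ht₂ : t₂ ∈ Set.Icc 0 1) :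
    agreeProb s₁ t₂ ≤ agreeProb s₁ t₁ + agreeProb s₂ t₁ + agreeProb s₂ t₂ := by
  -- On deterministic bits the inequality has slack `0` or `2`; the products below are the
  -- probabilities of the cases with slack `2`.
  have slack : agreeProb s₁ t₁ + agreeProb s₂ t₁ + agreeProb s₂ t₂ - agreeProb s₁ t₂ =
      2 * (s₁ * t₁ * (1 - t₂) + (1 - s₁) * (1 - t₁) * t₂
        + s₂ * t₁ * t₂ + (1 - s₂) * (1 - t₁) * (1 - t₂)) := by
    unfold agreeProb
    ring
  obtain ⟨s₁_nonneg, s₁_le⟩ := hs₁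
  obtain ⟨s₂_nonneg, s₂_le⟩ := hs₂
  obtain ⟨t₁_nonneg, t₁_le⟩ := ht₁
  obtain ⟨t₂_nonneg, t₂_le⟩ := ht₂
  rw [← sub_nonneg] at s₁_le s₂_le t₁_le t₂_le ⊢
  rw [slack]
  positivity

theorem IsBehaviour.probEq_add_probNe {M N : ℕ} {P : Bool → Bool → Fin M → Fin N → ℝ}
    (hP : IsBehaviour P) (x : Fin M) (y : Fin N) : probEq P x y + probNe P x y = 1 := by
  have hsum := hP.2 x y
  simp only [Fintype.sum_bool] at hsum
  unfold probEq probNe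
  linarith

theorem LocalFree.isBehaviour {M N : ℕ} {P : Bool → Bool → Fin M → Fin N → ℝ}
    (hP : LocalFree P) : IsBehaviour P := by
  obtain ⟨n, q, A, B, hq, hq_sum, hA, hA_sum, hB, hB_sum, hP⟩ := hP
  refine ⟨fun a b x y => ?_, fun x y => ?_⟩
  · rw [hP]
    exact sum_nonneg fun l _ => mul_nonneg (mul_nonneg (hq l) (hA a x l)) (hB b y l)
  · calc ∑ a, ∑ b, P a b x y
        = ∑ l, ∑ a, ∑ b, q l * A a x l * B b y l := by
          simp only [hP, Fintype.sum_bool, sum_add_distrib]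
      _ = ∑ l, q l := by simp only [← mul_sum, hA_sum, hB_sum, mul_one]
      _ = 1 := hq_sum

theorem LocalFree.exists_probEq_eq_sum_agreeProb {M N : ℕ}
    {P : Bool → Bool → Fin M → Fin N → ℝ} (hP : LocalFree P) :
    ∃ (n : ℕ) (q : Fin n → ℝ) (s : Fin M → Fin n → ℝ) (t : Fin N → Fin n → ℝ),
      (∀ l, 0 ≤ q l) ∧ (∀ x l, s x l ∈ Set.Icc 0 1) ∧ (∀ y l, t y l ∈ Set.Icc 0 1) ∧
        ∀ x y, probEq P x y = ∑ l, q l * agreeProb (s x l) (t y l) := by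
  obtain ⟨n, q, A, B, hq, -, hA, hA_sum, hB, hB_sum, hP⟩ := hP
  simp only [Fintype.sum_bool] at hA_sum hB_sum
  refine ⟨n, q, A true, B true, hq,
    fun x l => ⟨hA true x l, by linarith [hA_sum x l, hA false x l]⟩,
    fun y l => ⟨hB true y l, by linarith [hB_sum y l, hB false y l]⟩, fun x y => ?_⟩
  simp only [probEq, hP, ← sum_add_distrib]
  refine sum_congr rfl fun l _ => ?_
  rw [agreeProb, ← eq_sub_of_add_eq' (hA_sum x l), ← eq_sub_of_add_eq' (hB_sum y l)]
  ring

theorem LocalFree.probEq_quadrangle {M N : ℕ} {P : Bool → Bool → Fin M → Fin N → ℝ}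
    (hP : LocalFree P) (x x' : Fin M) (y y' : Fin N) :
    probEq P x y' ≤ probEq P x y + probEq P x' y + probEq P x' y' := by
  obtain ⟨n, q, s, t, hq, hs, ht, hP⟩ := hP.exists_probEq_eq_sum_agreeProb
  simp only [hP, ← sum_add_distrib, ← mul_add]
  exact sum_le_sum fun l _ => mul_le_mul_of_nonneg_left
    (agreeProb_quadrangle (hs x l) (hs x' l) (ht y l) (ht y' l)) (hq l)

theorem LocalFree.one_le_chainSum {n : ℕ} {P : Bool → Bool → Fin (n + 1) → Fin (n + 1) → ℝ}
    (hP : LocalFree P) : 1 ≤ chainSum P := by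
  rw [← hP.isBehaviour.probEq_add_probNe 0 (Fin.last n), chainSum]
  gcongr
  exact le_sum_chain_of_quadrangle hP.probEq_quadrangle id id

theorem chainSum_smul {n : ℕ} (p : ℝ) (P : Bool → Bool → Fin (n + 1) → Fin (n + 1) → ℝ) :
    chainSum (p • P) = p * chainSum P := by
  simp only [chainSum, probEq, probNe, Pi.smul_apply, smul_eq_mul, mul_add, mul_sum]

theorem chainSum_mono {n : ℕ} : Monotone (chainSum (n := n)) := by
  intro P P' h
  unfold chainSum probEq probNe
  gcongr <;> exact h _ _ _ _

theorem le_chainSum_of_mem_freeWeights {n : ℕ}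
    {P : Bool → Bool → Fin (n + 1) → Fin (n + 1) → ℝ} {p : ℝ} (hp : p ∈ freeWeights P) :
    p ≤ chainSum P := by
  obtain ⟨⟨hp₀, hp₁⟩, PL, Q, -, hPL, hQ, hdec⟩ := hp
  have hdom : p • PL ≤ P := fun a b x y => by
    rw [hdec]
    exact le_add_of_nonneg_right (mul_nonneg (sub_nonneg.2 hp₁) (hQ.1 a b x y))
  calc p ≤ p * chainSum PL := le_mul_of_one_le_right hp₀ hPL.one_le_chainSum
    _ = chainSum (p • PL) := (chainSum_smul p PL).symm
    _ ≤ chainSum P := chainSum_mono hdom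

theorem probEq_chainedBehaviour {M : ℕ} (x y : Fin M) :
    probEq (chainedBehaviour M) x y =
      (1 - Real.cos (Real.pi * (2 * ((x : ℝ) - (y : ℝ)) - 1) / (2 * M))) / 2 := by
  simp only [probEq, chainedBehaviour, outVal, if_true, Bool.false_eq_true, if_false]
  ring

theorem probNe_chainedBehaviour {M : ℕ} (x y : Fin M) :
    probNe (chainedBehaviour M) x y =
      (1 + Real.cos (Real.pi * (2 * ((x : ℝ) - (y : ℝ)) - 1) / (2 * M))) / 2 := by
  simp only [probNe, chainedBehaviour, outVal, if_true, Bool.false_eq_true, if_false]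
  ring

theorem probEq_chainedBehaviour_self {M : ℕ} (x : Fin M) :
    probEq (chainedBehaviour M) x x = (1 - Real.cos (Real.pi / (2 * M))) / 2 := by
  rw [probEq_chainedBehaviour, ← Real.cos_neg (Real.pi / _)]
  ring_nf

theorem probEq_chainedBehaviour_succ_castSucc {n : ℕ} (k : Fin n) :
    probEq (chainedBehaviour (n + 1)) k.succ k.castSucc =
      (1 - Real.cos (Real.pi / (2 * (n + 1 : ℕ)))) / 2 := by
  rw [probEq_chainedBehaviour, Fin.val_succ, Fin.val_castSucc, Nat.cast_succ]
  ring_nf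

theorem probNe_chainedBehaviour_zero_last (n : ℕ) :
    probNe (chainedBehaviour (n + 1)) 0 (Fin.last n) =
      (1 - Real.cos (Real.pi / (2 * (n + 1 : ℕ)))) / 2 := by
  have angle : Real.pi * (2 * (((0 : Fin (n + 1)) : ℝ) - (Fin.last n : ℝ)) - 1) /
      (2 * (n + 1 : ℕ)) = Real.pi / (2 * (n + 1 : ℕ)) - Real.pi := by
    rw [Fin.val_zero, Fin.val_last]
    push_cast
    field_simp
    ring
  rw [probNe_chainedBehaviour, angle, Real.cos_sub_pi, ← sub_eq_add_neg]

theorem chainSum_chainedBehaviour (n : ℕ) :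
    chainSum (chainedBehaviour (n + 1)) =
      (n + 1 : ℕ) * (1 - Real.cos (Real.pi / (2 * (n + 1 : ℕ)))) := by
  simp only [chainSum, probEq_chainedBehaviour_self, probEq_chainedBehaviour_succ_castSucc,
    probNe_chainedBehaviour_zero_last, sum_const, card_univ, Fintype.card_fin, nsmul_eq_mul]
  push_cast
  ring

theorem le_of_mem_freeWeights_chainedBehaviour {M : ℕ} (hM : M ≠ 0) {p : ℝ}
    (hp : p ∈ freeWeights (chainedBehaviour M)) :
    p ≤ M * (1 - Real.cos (Real.pi / (2 * M))) := by
  obtain ⟨n, rfl⟩ := Nat.exists_eq_succ_of_ne_zero hM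
  exact (le_chainSum_of_mem_freeWeights hp).trans_eq (chainSum_chainedBehaviour n)

theorem mul_one_sub_cos_div_le {x : ℝ} (hx : 0 < x) (θ : ℝ) :
    x * (1 - Real.cos (θ / x)) ≤ θ ^ 2 / 2 / x := by
  calc x * (1 - Real.cos (θ / x)) ≤ x * ((θ / x) ^ 2 / 2) := by
        gcongr
        linarith [Real.one_sub_sq_div_two_le_cos (x := θ / x)]
    _ = θ ^ 2 / 2 / x := by field_simp

theorem tendsto_mul_one_sub_cos_div (θ : ℝ) :
    Filter.Tendsto (fun x : ℝ => x * (1 - Real.cos (θ / x))) Filter.atTop (nhds 0) := by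
  refine squeeze_zero' ?_ ?_ (Filter.tendsto_id.const_div_atTop (θ ^ 2 / 2))
  · filter_upwards [Filter.eventually_ge_atTop 0] with x hx
    exact mul_nonneg hx (sub_nonneg.2 (Real.cos_le_one _))
  · filter_upwards [Filter.eventually_gt_atTop 0] with x hx using mul_one_sub_cos_div_le hx θ

theorem chained_free_fraction_vanishes :
    (∀ M : ℕ, 2 ≤ M → ∀ p : ℝ, p ∈ Set.Icc (0 : ℝ) 1 →
      ∀ PL Q : Bool → Bool → Fin M → Fin M → ℝ,
        IsBehaviour PL → LocalFree PL → IsBehaviour Q →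
        (∀ a b x y, chainedBehaviour M a b x y = p * PL a b x y + (1 - p) * Q a b x y) →
        p ≤ (M : ℝ) * (1 - Real.cos (Real.pi / (2 * (M : ℝ))))) ∧
    Filter.Tendsto
      (fun M : ℕ => sSup {p : ℝ | p ∈ Set.Icc (0 : ℝ) 1 ∧
        ∃ PL Q : Bool → Bool → Fin M → Fin M → ℝ,
          IsBehaviour PL ∧ LocalFree PL ∧ IsBehaviour Q ∧
          ∀ a b x y, chainedBehaviour M a b x y = p * PL a b x y + (1 - p) * Q a b x y})
      Filter.atTop (nhds 0) := by
  refine ⟨fun M hM p hp PL Q hPL hfree hQ hdec =>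
    le_of_mem_freeWeights_chainedBehaviour (by omega) ⟨hp, PL, Q, hPL, hfree, hQ, hdec⟩, ?_⟩
  have bound_tendsto : Filter.Tendsto
      (fun M : ℕ => (M : ℝ) * (1 - Real.cos (Real.pi / (2 * M)))) Filter.atTop (nhds 0) := by
    simpa only [Function.comp_def, div_div] using
      (tendsto_mul_one_sub_cos_div (Real.pi / 2)).comp tendsto_natCast_atTop_atTop
  refine squeeze_zero' (.of_forall fun M => Real.sSup_nonneg fun p hp => hp.1.1) ?_ bound_tendsto
  filter_upwards [Filter.eventually_ne_atTop 0] with M hM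
  exact Real.sSup_le (fun p hp => le_of_mem_freeWeights_chainedBehaviour hM hp)
    (mul_nonneg M.cast_nonneg (sub_nonneg.2 (Real.cos_le_one _)))
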